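/- arXiv:math/0512194 — 3 statements merged into one kernel-verified Lean document; each statement's English description precedes it below -/
import Mathlib

section
/- Let t : 𝒜 ⥤ ℬ ⥤ Type be a Type-valued bifunctor, and suppose given biuniversal elements u ∈ t(A, B), u' ∈ t(A', B'), u'' ∈ t(A'', B'') for objects A, A', A'' of 𝒜 and B, B', B'' of ℬ. Say that α : A ⟶ A' corresponds to β : B' ⟶ B when t(α, B)(u) = t(A', β)(u') in t(A', B). Then: (i) this correspondence is a bijection between Hom(A, A') and Hom(B', B); (ii) when A' = A, B' = B and u' = u, the identity of A corresponds to the identity of B; (iii) if α : A ⟶ A' corresponds to β : B' ⟶ B (with respect to u, u') and α' : A' ⟶ A'' corresponds to β' : B'' ⟶ B' (with respect to u', u''), then α' ∘ α corresponds to β ∘ β' (with respect to u, u''). Hence a family of biuniversal elements induces a duality (contravariant isomorphism of categories) between the corresponding objects. -/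
open CategoryTheory

universe v v' u u' w

variable {𝒜 : Type u} [Category.{v} 𝒜] {ℬ : Type u'} [Category.{v'} ℬ]

/-- `u ∈ t(A,B)` is universal for `A` if `β ↦ t(A,β)(u)` is bijective for every `B'`. -/
def UnivForA (t : 𝒜 ⥤ ℬ ⥤ Type w) {A : 𝒜} {B : ℬ} (u : (t.obj A).obj B) : Prop :=
  ∀ B' : ℬ, Function.Bijective (fun β : B ⟶ B' => (t.obj A).map β u)

/-- `u ∈ t(A,B)` is universal for `B` if `α ↦ t(α,B)(u)` is bijective for every `A'`. -/
def UnivForB (t : 𝒜 ⥤ ℬ ⥤ Type w) {A : 𝒜} {B : ℬ} (u : (t.obj A).obj B) : Prop :=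
  ∀ A' : 𝒜, Function.Bijective (fun α : A ⟶ A' => (t.map α).app B u)

/-- A biuniversal element is universal for both arguments. -/
def Biuniv (t : 𝒜 ⥤ ℬ ⥤ Type w) {A : 𝒜} {B : ℬ} (u : (t.obj A).obj B) : Prop :=
  UnivForA t u ∧ UnivForB t u

/-- `α : A ⟶ A'` corresponds to `β : B' ⟶ B` (w.r.t. biuniversal elements `u`, `u'`)
when `t(α,B)(u) = t(A',β)(u')` in `t(A',B)`. -/
def Corr (t : 𝒜 ⥤ ℬ ⥤ Type w) {A A' : 𝒜} {B B' : ℬ}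
    (u : (t.obj A).obj B) (u' : (t.obj A').obj B') (α : A ⟶ A') (β : B' ⟶ B) : Prop :=
  (t.map α).app B u = (t.obj A').map β u'

/-!
Both actions land in the same set: universality of `u` for `B` identifies `Hom(A, A')` with
`t(A', B)`, and universality of `u'` for `A'` identifies `Hom(B', B)` with `t(A', B)`. The
correspondence is the composite of these identifications. It respects composition because the
actions of `𝒜` and `ℬ` on `t` commute.
-/

section Correspondence

variable {t : 𝒜 ⥤ ℬ ⥤ Type w} {A A' A'' : 𝒜} {B B' B'' : ℬ}
  {u : (t.obj A).obj B} {u' : (t.obj A').obj B'} {u'' : (t.obj A'').obj B''}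

theorem UnivForA.existsUnique_corr (hu' : UnivForA t u') (u : (t.obj A).obj B) (α : A ⟶ A') :
    ∃! β : B' ⟶ B, Corr t u u' α β :=
  (existsUnique_congr fun _ => eq_comm).mp ((hu' B).existsUnique ((t.map α).app B u))

theorem UnivForB.existsUnique_corr (hu : UnivForB t u) (u' : (t.obj A').obj B') (β : B' ⟶ B) :
    ∃! α : A ⟶ A', Corr t u u' α β :=
  (hu A').existsUnique ((t.obj A').map β u')

theorem Corr.id (u : (t.obj A).obj B) : Corr t u u (𝟙 A) (𝟙 B) := by
  simp [Corr]

theorem Corr.comp {α : A ⟶ A'} {α' : A' ⟶ A''} {β : B' ⟶ B} {β' : B'' ⟶ B'}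
    (h : Corr t u u' α β) (h' : Corr t u' u'' α' β') : Corr t u u'' (α ≫ α') (β' ≫ β) :=
  calc (t.map (α ≫ α')).app B u
      = (t.map α').app B ((t.map α).app B u) := by simp
    _ = (t.map α').app B ((t.obj A').map β u') := congrArg ((t.map α').app B) h
    _ = (t.obj A'').map β ((t.map α').app B' u') := NatTrans.naturality_apply (t.map α') β u'
    _ = (t.obj A'').map β ((t.obj A'').map β' u'') := congrArg ((t.obj A'').map β) h'
    _ = (t.obj A'').map (β' ≫ β) u'' := by simp

end Correspondence

theorem stmt_10_general (t : 𝒜 ⥤ ℬ ⥤ Type w) {A A' A'' : 𝒜} {B B' B'' : ℬ}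
    (u : (t.obj A).obj B) (u' : (t.obj A').obj B') (u'' : (t.obj A'').obj B'')
    (hu : UnivForB t u) (hu' : UnivForA t u') :
    (∀ α : A ⟶ A', ∃! β : B' ⟶ B, Corr t u u' α β) ∧
    (∀ β : B' ⟶ B, ∃! α : A ⟶ A', Corr t u u' α β) ∧
    Corr t u u (𝟙 A) (𝟙 B) ∧
    (∀ (α : A ⟶ A') (α' : A' ⟶ A'') (β : B' ⟶ B) (β' : B'' ⟶ B'),
      Corr t u u' α β → Corr t u' u'' α' β' → Corr t u u'' (α ≫ α') (β' ≫ β)) :=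
  ⟨hu'.existsUnique_corr u, hu.existsUnique_corr u', Corr.id u, fun _ _ _ _ => Corr.comp⟩

/-- the correspondence induced by biuniversal elements is a bijection
between hom-sets, preserves identities, and is (contravariantly) functorial. -/
theorem stmt_10 (t : 𝒜 ⥤ ℬ ⥤ Type w) {A A' A'' : 𝒜} {B B' B'' : ℬ}
    (u : (t.obj A).obj B) (u' : (t.obj A').obj B') (u'' : (t.obj A'').obj B'')
    (hu : Biuniv t u) (hu' : Biuniv t u') (hu'' : Biuniv t u'') :
    (∀ α : A ⟶ A', ∃! β : B' ⟶ B, Corr t u u' α β) ∧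
    (∀ β : B' ⟶ B, ∃! α : A ⟶ A', Corr t u u' α β) ∧
    Corr t u u (𝟙 A) (𝟙 B) ∧
    (∀ (α : A ⟶ A') (α' : A' ⟶ A'') (β : B' ⟶ B) (β' : B'' ⟶ B'),
      Corr t u u' α β → Corr t u' u'' α' β' → Corr t u u'' (α ≫ α') (β' ≫ β)) :=
  stmt_10_general t u u' u'' hu.2 hu'.1
end

section
/- Let L : 𝒜 ⥤ ℬ ⥤ 𝒞 and R : ℬᵒᵖ ⥤ 𝒞 ⥤ 𝒜 be functors equipped with an adjunction with parameter. Then L is right adequate if and only if R is left adequate; that is, the functor ℬ ⥤ [𝒜, 𝒞] sending B to the partial functor L(-, B) is fully faithful if and only if the functor ℬᵒᵖ ⥤ [𝒞, 𝒜] sending B to the partial functor R(B, -) is fully faithful. -/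
/-!
The bijections `e` make `L(-, B)` left adjoint to `R(B, -)` for each `B`. Taking conjugates is
therefore a bijection `(L(-, B') ⟶ L(-, B)) ≃ (R(B, -) ⟶ R(B', -))`, and naturality of `e` in the
parameter says exactly that the conjugate of `L(-, k)` is `R(k, -)` for `k : B' ⟶ B`. So the two
curried functors induce the same map on hom-sets, up to a bijection of the codomains.
-/

open CategoryTheory Opposite

universe v₁ v₂ v₃ u₁ u₂ u₃

variable {𝒜 : Type u₁} [Category.{v₁} 𝒜] {ℬ : Type u₂} [Category.{v₂} ℬ]
  {𝒞 : Type u₃} [Category.{v₃} 𝒞]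

section

variable {F : ℬ ⥤ 𝒜 ⥤ 𝒞} {G : ℬᵒᵖ ⥤ 𝒞 ⥤ 𝒜}

/-- The adjunction with parameter determined by bijections on hom-sets natural in all three
variables. The parameter is the first argument of both bifunctors, as in `F ⊣₂ G`. -/
def parametrizedAdjunctionOfHomEquiv
    (e : ∀ (A : 𝒜) (B : ℬ) (C : 𝒞), ((F.obj B).obj A ⟶ C) ≃ (A ⟶ (G.obj (op B)).obj C))
    (naturality_right : ∀ (A : 𝒜) (B : ℬ) (C C' : 𝒞) (g : C ⟶ C') (f : (F.obj B).obj A ⟶ C),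
      e A B C' (f ≫ g) = e A B C f ≫ (G.obj (op B)).map g)
    (naturality_left : ∀ (A' A : 𝒜) (B : ℬ) (C : 𝒞) (h : A' ⟶ A) (f : (F.obj B).obj A ⟶ C),
      e A' B C ((F.obj B).map h ≫ f) = h ≫ e A B C f)
    (naturality_param : ∀ (A : 𝒜) (B' B : ℬ) (C : 𝒞) (k : B' ⟶ B) (f : (F.obj B).obj A ⟶ C),
      e A B' C ((F.map k).app A ≫ f) = e A B C f ≫ (G.map k.op).app C) :
    F ⊣₂ G :=
  .mk'
    (fun B => .mkOfHomEquiv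
      { homEquiv := fun A C => e A B C
        homEquiv_naturality_left_symm := fun h g => by
          rw [Equiv.symm_apply_eq, naturality_left, Equiv.apply_symm_apply]
        homEquiv_naturality_right := fun f g => naturality_right _ B _ _ g f })
    (fun k A C f => by
      simpa only [Adjunction.mkOfHomEquiv_homEquiv] using naturality_param A _ _ C k f)

theorem conjugateEquiv_parametrizedAdjunction_map (adj : F ⊣₂ G) {B' B : ℬ} (k : B' ⟶ B) :
    conjugateEquiv (adj.adj B) (adj.adj B') (F.map k) = G.map k.op := by
  ext C
  apply ((adj.adj B').homEquiv _ _).symm.injective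
  rw [Adjunction.homEquiv_counit, Adjunction.homEquiv_counit, conjugateEquiv_counit]
  exact NatTrans.congr_app (adj.whiskerLeft_map_counit k) C

theorem conjugateEquiv_parametrizedAdjunction_comp_map (adj : F ⊣₂ G) (B' B : ℬ) :
    conjugateEquiv (adj.adj B) (adj.adj B') ∘ F.map =
      G.map ∘ Quiver.Hom.opEquiv (X := B') (Y := B) :=
  funext (conjugateEquiv_parametrizedAdjunction_map adj)

theorem map_injective_iff_of_parametrizedAdjunction (adj : F ⊣₂ G) (B' B : ℬ) :
    Function.Injective (F.map : (B' ⟶ B) → (F.obj B' ⟶ F.obj B)) ↔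
      Function.Injective (G.map : (op B ⟶ op B') → (G.obj (op B) ⟶ G.obj (op B'))) := by
  rw [← (conjugateEquiv (adj.adj B) (adj.adj B')).comp_injective,
    conjugateEquiv_parametrizedAdjunction_comp_map, Equiv.injective_comp]

theorem map_surjective_iff_of_parametrizedAdjunction (adj : F ⊣₂ G) (B' B : ℬ) :
    Function.Surjective (F.map : (B' ⟶ B) → (F.obj B' ⟶ F.obj B)) ↔
      Function.Surjective (G.map : (op B ⟶ op B') → (G.obj (op B) ⟶ G.obj (op B'))) := by
  rw [← (conjugateEquiv (adj.adj B) (adj.adj B')).comp_surjective,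
    conjugateEquiv_parametrizedAdjunction_comp_map, Equiv.surjective_comp]

theorem full_iff_of_parametrizedAdjunction (adj : F ⊣₂ G) : F.Full ↔ G.Full where
  mp _ := ⟨fun {X Y} =>
    (map_surjective_iff_of_parametrizedAdjunction adj Y.unop X.unop).mp F.map_surjective⟩
  mpr _ := ⟨fun {B' B} =>
    (map_surjective_iff_of_parametrizedAdjunction adj B' B).mpr G.map_surjective⟩

theorem faithful_iff_of_parametrizedAdjunction (adj : F ⊣₂ G) : F.Faithful ↔ G.Faithful where
  mp _ := ⟨fun {X Y} => @((map_injective_iff_of_parametrizedAdjunction adj Y.unop X.unop).mp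
    F.map_injective)⟩
  mpr _ := ⟨fun {B' B} => @((map_injective_iff_of_parametrizedAdjunction adj B' B).mpr
    G.map_injective)⟩

end

/-- for an adjunction with parameter `L(-,B) ⊣ R(B,-)`, `L` is right
adequate iff `R` is left adequate: the curried functor `B ↦ L(-,B)` (that is, `L.flip`)
is fully faithful iff the curried functor `B ↦ R(B,-)` (that is, `R` itself) is fully
faithful. -/
theorem stmt_13 (L : 𝒜 ⥤ ℬ ⥤ 𝒞) (R : ℬᵒᵖ ⥤ 𝒞 ⥤ 𝒜)
    (e : ∀ (A : 𝒜) (B : ℬ) (C : 𝒞), ((L.obj A).obj B ⟶ C) ≃ (A ⟶ (R.obj (op B)).obj C))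
    (natC : ∀ (A : 𝒜) (B : ℬ) (C C' : 𝒞) (g : C ⟶ C') (f : (L.obj A).obj B ⟶ C),
      e A B C' (f ≫ g) = e A B C f ≫ (R.obj (op B)).map g)
    (natA : ∀ (A' A : 𝒜) (B : ℬ) (C : 𝒞) (h : A' ⟶ A) (f : (L.obj A).obj B ⟶ C),
      e A' B C ((L.map h).app B ≫ f) = h ≫ e A B C f)
    (natB : ∀ (A : 𝒜) (B' B : ℬ) (C : 𝒞) (k : B' ⟶ B) (f : (L.obj A).obj B ⟶ C),
      e A B' C ((L.obj A).map k ≫ f) = e A B C f ≫ (R.map k.op).app C) :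
    (L.flip.Full ∧ L.flip.Faithful) ↔ (R.Full ∧ R.Faithful) := by
  let adj : L.flip ⊣₂ R := parametrizedAdjunctionOfHomEquiv e natC natA natB
  exact and_congr (full_iff_of_parametrizedAdjunction adj)
    (faithful_iff_of_parametrizedAdjunction adj)
end

section
/- Let 𝒜 be a category with tensor (finite limits and an adjoint triple Γ_! ⊣ Γ* ⊣ Γ_* : 𝒜 ⥤ Type), and let 𝒜' be a full reflective subcategory of 𝒜, with inclusion ι : 𝒜' ⥤ 𝒜, reflection r : 𝒜 ⥤ 𝒜' and unit η : id ⟶ ι ⋙? r (η_A : A ⟶ ι(r(A))). Let B be an object of 𝒜 such that the functor A ↦ Γ_!(A × B) : 𝒜 ⥤ Type admits a right adjoint N : Type ⥤ 𝒜 all of whose values N(S) lie in the essential image of 𝒜'. Then for every object A of 𝒜 the map Γ_!(η_A × id_B) : Γ_!(A × B) → Γ_!(ι(r(A)) × B) is a bijection, naturally in A. -/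
open CategoryTheory Limits

universe v v' u u'

/-!
Write `F A = Γ_!(A × B)`. For an adjunction `F ⊣ N`, a morphism `F.map f` is invertible if and only
if every `N S` is local with respect to `f`, by the Yoneda lemma. The objects of a reflective
subcategory are local with respect to the units `η_A`, so each `F.map η_A` is invertible.
-/

theorem isLocal_range_obj_iff_isIso_map {C D : Type*} [Category* C] [Category* D]
    {F : C ⥤ D} {N : D ⥤ C} (adj : F ⊣ N) {X Y : C} (f : X ⟶ Y) :
    ObjectProperty.isLocal (· ∈ Set.range N.obj) f ↔ IsIso (F.map f) := by
  have precomp_bijective_iff (S : D) :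
      Function.Bijective (fun g : Y ⟶ N.obj S ↦ f ≫ g) ↔
        Function.Bijective (fun g : F.obj Y ⟶ S ↦ F.map f ≫ g) := by
    rw [← Function.Bijective.of_comp_iff _ (adj.homEquiv Y S).bijective,
      ← Function.Bijective.of_comp_iff' (adj.homEquiv X S).bijective]
    exact iff_of_eq <| congrArg _ <|
      funext fun g ↦ (adj.homEquiv_naturality_left f g).symm
  rw [isIso_iff_coyoneda_map_bijective]
  exact Set.forall_mem_range.trans (forall_congr' precomp_bijective_iff)

theorem isLocal_essImage_unit_app {C D : Type*} [Category* C] [Category* D]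
    {r : C ⥤ D} {ι : D ⥤ C} [ι.Full] [ι.Faithful] (adj : r ⊣ ι) (A : C) :
    ι.essImage.isLocal (adj.unit.app A) := by
  rw [← Functor.isoClosure_eq_essImage, ObjectProperty.isoClosure_isLocal]
  exact ObjectProperty.isLocal_adj_unit_app adj A

theorem stmt_15_general {𝒜 𝒜' 𝒞 : Type*} [Category* 𝒜] [Category* 𝒜'] [Category* 𝒞]
    {ι : 𝒜' ⥤ 𝒜} [ι.Full] [ι.Faithful] {r : 𝒜 ⥤ 𝒜'} (adj : r ⊣ ι)
    {F : 𝒜 ⥤ 𝒞} {N : 𝒞 ⥤ 𝒜} (adjN : F ⊣ N) (hN : ∀ S : 𝒞, ι.essImage (N.obj S)) :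
    IsIso (Functor.whiskerRight adj.unit F) := by
  rw [NatTrans.isIso_iff_isIso_app]
  intro A
  have unit_isLocal : ObjectProperty.isLocal (· ∈ Set.range N.obj) (adj.unit.app A) :=
    Set.forall_mem_range.mpr fun S ↦ isLocal_essImage_unit_app adj A _ (hN S)
  exact (isLocal_range_obj_iff_isIso_map adjN _).mp unit_isLocal

/-- let `𝒜` be a category with tensor (finite limits and an adjoint
triple `Γ_! ⊣ Γ* ⊣ Γ_*`), `𝒜'` a full reflective subcategory with inclusion `ι`,
reflection `r` and unit `η`.  If `B` is such that `A ↦ Γ_!(A × B)` has a right adjoint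
`N` whose values all lie in the essential image of `ι`, then every
`Γ_!(η_A × id_B) : Γ_!(A × B) → Γ_!(ι(r A) × B)` is a bijection, naturally in `A`. -/
theorem stmt_15 {𝒜 : Type u} [Category.{v} 𝒜] [HasFiniteLimits 𝒜]
    (Γshriek : 𝒜 ⥤ Type v) (Γstar : Type v ⥤ 𝒜) (Γlower : 𝒜 ⥤ Type v)
    (adj₁ : Γshriek ⊣ Γstar) (adj₂ : Γstar ⊣ Γlower)
    {𝒜' : Type u'} [Category.{v'} 𝒜'] (ι : 𝒜' ⥤ 𝒜) [ι.Full] [ι.Faithful]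
    (r : 𝒜 ⥤ 𝒜') (adj : r ⊣ ι)
    (B : 𝒜) (N : Type v ⥤ 𝒜) (adjN : (prod.functor.flip.obj B ⋙ Γshriek) ⊣ N)
    (hN : ∀ S : Type v, ι.essImage (N.obj S)) :
    (∀ A : 𝒜,
      Function.Bijective (Γshriek.map (prod.map (adj.unit.app A) (𝟙 B)))) ∧
    (∀ (A A' : 𝒜) (f : A ⟶ A'),
      Γshriek.map (prod.map (adj.unit.app A') (𝟙 B)) ∘ Γshriek.map (prod.map f (𝟙 B)) =
        Γshriek.map (prod.map ((r ⋙ ι).map f) (𝟙 B)) ∘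
          Γshriek.map (prod.map (adj.unit.app A) (𝟙 B))) := by
  let unitTensor := Functor.whiskerRight adj.unit (prod.functor.flip.obj B ⋙ Γshriek)
  have isIso_unitTensor : IsIso unitTensor := stmt_15_general adj adjN hN
  exact ⟨fun A ↦ (isIso_iff_bijective (unitTensor.app A)).mp inferInstance,
    fun _ _ f ↦ funext (ConcreteCategory.congr_hom (unitTensor.naturality f))⟩
end
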